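/- arXiv:0809.3494 — 4 statements merged into one kernel-verified Lean document; each statement's English description precedes it below -/
import Mathlib

section
/- Assume the continuity condition holds and that Σ_{k≥0} |V_i(k)|·λ(k) < ∞. Then there exists, for each integer k ≥ −1, a function p^{[k]} : A × A^{V_i(k)} → [0,1] with Σ_{a∈A} p^{[k]}(a,w) = 1 for every w ∈ A^{V_i(k)} (for k = −1, p^{[−1]} is a probability on A not depending on any configuration), such that for every a ∈ A and every configuration η ∈ A^{ℤ^d}, p(a,η) = Σ_{k≥−1} λ(k)·p^{[k]}(a, η(V_i(k))). -/
open scoped BigOperators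

/-- The L¹-norm on `ℤ^d`. -/
def norm1 {d : ℕ} (x : Fin d → ℤ) : ℤ := ∑ u, |x u|

/-- `V_i(k) = {j : ‖j - i‖₁ ≤ k}`; for `k = -1` this is the empty set. -/
def ball {d : ℕ} (i : Fin d → ℤ) (k : ℤ) : Set (Fin d → ℤ) :=
  {j | norm1 (j - i) ≤ k}

/-- `r^{[k]}(a, η(V_i(k))) = inf {p(a,ζ) : ζ(V_i(k)) = η(V_i(k))}`. -/
noncomputable def rfun {d : ℕ} {A : Type*} (i : Fin d → ℤ)
    (p : A → ((Fin d → ℤ) → A) → ℝ) (k : ℤ) (a : A) (η : (Fin d → ℤ) → A) : ℝ :=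
  sInf {x | ∃ ζ : (Fin d → ℤ) → A, (∀ j ∈ ball i k, η j = ζ j) ∧ p a ζ = x}

/-- The continuity modulus `δ(k)`. -/
noncomputable def delta {d : ℕ} {A : Type*} (i : Fin d → ℤ)
    (p : A → ((Fin d → ℤ) → A) → ℝ) (k : ℤ) : ℝ :=
  sSup {x | ∃ (a : A) (η ζ : (Fin d → ℤ) → A),
    (∀ j ∈ ball i k, η j = ζ j) ∧ |p a η - p a ζ| = x}

/-- `α(k)`; for `k ≥ 0` it is the min over `w ∈ A^{V_i(k)}` of `Σ_a r^{[k]}(a,w)`,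
and for `k = -1` it is `Σ_a r^{[-1]}(a)` (the expression below depends only on
`η(V_i(k))`, so the infimum over configurations realizes the minimum over `w`). -/
noncomputable def alphafun {d : ℕ} {A : Type*} [Fintype A] (i : Fin d → ℤ)
    (p : A → ((Fin d → ℤ) → A) → ℝ) (k : ℤ) : ℝ :=
  sInf {x | ∃ η : (Fin d → ℤ) → A, (∑ a, rfun i p k a η) = x}

/-- `λ(-1) = α(-1)` and `λ(k) = α(k) - α(k-1)` for `k ≥ 0`. -/
noncomputable def lamfun {d : ℕ} {A : Type*} [Fintype A] (i : Fin d → ℤ)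
    (p : A → ((Fin d → ℤ) → A) → ℝ) (k : ℤ) : ℝ :=
  if k = -1 then alphafun i p (-1) else alphafun i p k - alphafun i p (k - 1)

/-- Increment kernel. -/
noncomputable def incr {A : Type*} [Fintype A] (R : ℕ → A → ℝ) (be : ℕ → ℝ) (n : ℕ)
    (Q : A → ℝ) (a : A) : ℝ :=
  if ∑ b, R n b = be n then 1 / (Fintype.card A : ℝ) else (R n a - Q a) / (∑ b, R n b - be n)

/-- Cumulative masses. -/
noncomputable def cumQ {A : Type*} [Fintype A] (R : ℕ → A → ℝ) (be : ℕ → ℝ) : ℕ → A → ℝ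
  | 0 => fun _ => 0
  | n + 1 => fun a => cumQ R be n a + (be (n + 1) - be n) * incr R be n (cumQ R be n) a

theorem cumQ_congr {A : Type*} [Fintype A] (R R' : ℕ → A → ℝ) (be : ℕ → ℝ) (n : ℕ)
    (h : ∀ m < n, R m = R' m) : cumQ R be n = cumQ R' be n := by
  induction n with
  | zero => rfl
  | succ n ih =>
    have h1 := ih (fun m hm => h m (by omega))
    funext a
    simp only [cumQ, h1, incr, h n (by omega)]

theorem incr_main {A : Type*} [Fintype A] [Nonempty A] (R : ℕ → A → ℝ) (be : ℕ → ℝ)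
    (n : ℕ) (Q : A → ℝ) (hQ : ∀ a, Q a ≤ R n a) (hQs : ∑ a, Q a = be n)
    (hbe : be n ≤ be (n + 1)) (hS : be (n + 1) ≤ ∑ a, R n a) :
    (∀ a, 0 ≤ incr R be n Q a) ∧ (∑ a, incr R be n Q a = 1) ∧
    (∀ a, Q a + (be (n + 1) - be n) * incr R be n Q a ≤ R n a) := by
  by_cases h : ∑ b, R n b = be n
  · have hc : (Fintype.card A : ℝ) ≠ 0 := by exact_mod_cast Fintype.card_ne_zero
    have h0 : be (n + 1) - be n = 0 := by linarith
    refine ⟨fun a => ?_, ?_, fun a => ?_⟩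
    · simp only [incr, if_pos h]; positivity
    · simp [incr, if_pos h, hc]
    · rw [h0]; simpa using hQ a
  · have hpos : 0 < ∑ b, R n b - be n := by
      rcases lt_or_eq_of_le (hbe.trans hS) with h' | h'
      · linarith
      · exact absurd h'.symm h
    refine ⟨fun a => ?_, ?_, fun a => ?_⟩
    · simp only [incr, if_neg h]
      exact div_nonneg (by linarith [hQ a]) hpos.le
    · simp only [incr, if_neg h]
      rw [← Finset.sum_div, Finset.sum_sub_distrib, hQs, div_self hpos.ne']
    · simp only [incr, if_neg h]
      have : (be (n + 1) - be n) * ((R n a - Q a) / (∑ b, R n b - be n)) ≤ R n a - Q a := by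
        rw [← mul_div_assoc, div_le_iff₀ hpos, mul_comm]
        exact mul_le_mul_of_nonneg_left (by linarith) (by linarith [hQ a])
      linarith

theorem cumQ_main {A : Type*} [Fintype A] [Nonempty A] (R : ℕ → A → ℝ) (be : ℕ → ℝ)
    (hR0 : ∀ a, 0 ≤ R 0 a) (hR : ∀ n a, R n a ≤ R (n + 1) a) (h0 : be 0 = 0)
    (hbe : ∀ n, be n ≤ be (n + 1)) (hS : ∀ n, be (n + 1) ≤ ∑ a, R n a) (n : ℕ) :
    (∀ a, cumQ R be n a ≤ R n a) ∧ ∑ a, cumQ R be n a = be n := by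
  induction n with
  | zero => exact ⟨hR0, by simp [cumQ, h0]⟩
  | succ n ih =>
    obtain ⟨_, h2, h3⟩ := incr_main R be n (cumQ R be n) ih.1 ih.2 (hbe n) (hS n)
    refine ⟨fun a => (h3 a).trans (hR n a), ?_⟩
    simp only [cumQ, Finset.sum_add_distrib, ← Finset.mul_sum, h2, ih.2]
    ring

theorem cumQ_sum {A : Type*} [Fintype A] (R : ℕ → A → ℝ) (be : ℕ → ℝ) (n : ℕ) (a : A) :
    ∑ m ∈ Finset.range n, (be (m + 1) - be m) * incr R be m (cumQ R be m) a
      = cumQ R be n a := by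
  induction n with
  | zero => simp [cumQ]
  | succ n ih => rw [Finset.sum_range_succ, ih]; rfl

section
variable {d : ℕ} {A : Type*} [Fintype A] (i : Fin d → ℤ) (p : A → ((Fin d → ℤ) → A) → ℝ)

theorem rfun_bdd (hp0 : ∀ a η, 0 ≤ p a η) (k : ℤ) (a : A) (η : (Fin d → ℤ) → A) :
    BddBelow {x | ∃ ζ : (Fin d → ℤ) → A, (∀ j ∈ ball i k, η j = ζ j) ∧ p a ζ = x} :=
  ⟨0, by rintro x ⟨ζ, _, rfl⟩; exact hp0 a ζ⟩

theorem rfun_nonneg (hp0 : ∀ a η, 0 ≤ p a η) (k : ℤ) (a : A) (η : (Fin d → ℤ) → A) :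
    0 ≤ rfun i p k a η :=
  Real.sInf_nonneg (by rintro x ⟨ζ, _, rfl⟩; exact hp0 a ζ)

theorem rfun_le (hp0 : ∀ a η, 0 ≤ p a η) (k : ℤ) (a : A) (η : (Fin d → ℤ) → A) :
    rfun i p k a η ≤ p a η :=
  csInf_le (rfun_bdd i p hp0 k a η) ⟨η, fun _ _ => rfl, rfl⟩

theorem le_rfun (k : ℤ) (a : A) (η : (Fin d → ℤ) → A) (c : ℝ)
    (h : ∀ ζ : (Fin d → ℤ) → A, (∀ j ∈ ball i k, η j = ζ j) → c ≤ p a ζ) :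
    c ≤ rfun i p k a η :=
  le_csInf ⟨p a η, η, fun _ _ => rfl, rfl⟩ (by rintro x ⟨ζ, hζ, rfl⟩; exact h ζ hζ)

theorem rfun_mono (hp0 : ∀ a η, 0 ≤ p a η) {k l : ℤ} (hkl : k ≤ l) (a : A)
    (η : (Fin d → ℤ) → A) : rfun i p k a η ≤ rfun i p l a η :=
  le_rfun i p l a η _ fun ζ hζ => csInf_le (rfun_bdd i p hp0 k a η)
    ⟨ζ, fun j hj => hζ j (le_trans (show norm1 (j - i) ≤ k from hj) hkl), rfl⟩

theorem rfun_congr {k l : ℤ} (hkl : k ≤ l) (a : A) (η ζ : (Fin d → ℤ) → A)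
    (h : ∀ j ∈ ball i l, η j = ζ j) : rfun i p k a η = rfun i p k a ζ := by
  have h' : ∀ j ∈ ball i k, η j = ζ j :=
    fun j hj => h j (le_trans (show norm1 (j - i) ≤ k from hj) hkl)
  unfold rfun
  congr 1
  ext x
  constructor
  · rintro ⟨ξ, hξ, rfl⟩
    exact ⟨ξ, fun j hj => (h' j hj).symm.trans (hξ j hj), rfl⟩
  · rintro ⟨ξ, hξ, rfl⟩
    exact ⟨ξ, fun j hj => (h' j hj).trans (hξ j hj), rfl⟩

theorem alpha_le (hp0 : ∀ a η, 0 ≤ p a η) (k : ℤ) (η : (Fin d → ℤ) → A) :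
    alphafun i p k ≤ ∑ a, rfun i p k a η :=
  csInf_le ⟨0, by
    rintro x ⟨ζ, rfl⟩
    exact Finset.sum_nonneg fun a _ => rfun_nonneg i p hp0 k a ζ⟩ ⟨η, rfl⟩

theorem le_alpha [Nonempty A] (k : ℤ) (c : ℝ)
    (h : ∀ η : (Fin d → ℤ) → A, c ≤ ∑ a, rfun i p k a η) : c ≤ alphafun i p k :=
  le_csInf ⟨_, Classical.arbitrary _, rfl⟩ (by rintro x ⟨ζ, rfl⟩; exact h ζ)

theorem alpha_mono [Nonempty A] (hp0 : ∀ a η, 0 ≤ p a η) {k l : ℤ} (hkl : k ≤ l) :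
    alphafun i p k ≤ alphafun i p l :=
  le_alpha i p l _ fun η => (alpha_le i p hp0 k η).trans
    (Finset.sum_le_sum fun a _ => rfun_mono i p hp0 hkl a η)

theorem alpha_lower [Nonempty A] (hp0 : ∀ a η, 0 ≤ p a η) (hp1 : ∀ a η, p a η ≤ 1)
    (hpsum : ∀ η, ∑ a, p a η = 1) (k : ℤ) :
    1 - (Fintype.card A : ℝ) * delta i p k ≤ alphafun i p k := by
  refine le_alpha i p k _ fun η => ?_
  have h : ∀ a, p a η - delta i p k ≤ rfun i p k a η := fun a => by
    refine le_rfun i p k a η _ fun ζ hζ => ?_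
    have : |p a η - p a ζ| ≤ delta i p k := by
      refine le_csSup ⟨1, ?_⟩ ⟨a, η, ζ, hζ, rfl⟩
      rintro x ⟨b, ξ, ξ', _, rfl⟩
      rw [abs_le]
      constructor <;> linarith [hp0 b ξ, hp0 b ξ', hp1 b ξ, hp1 b ξ']
    linarith [le_abs_self (p a η - p a ζ)]
  calc _ = ∑ a, (p a η - delta i p k) := by
        rw [Finset.sum_sub_distrib, hpsum]; simp
    _ ≤ _ := Finset.sum_le_sum fun a _ => h a

end

/-- Theorem 2.1 of Galves–Garcia–Löcherbach: under the continuity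
condition and the summability condition `Σ_{k≥0} |V_i(k)| λ(k) < ∞`, the probability
kernel `p` decomposes as a countable mixture `p(a,η) = Σ_{k≥-1} λ(k) p^{[k]}(a, η(V_i(k)))`
of local kernels `p^{[k]}` (functions of `η(V_i(k))` only, probabilities on `A`). -/
theorem decomposition_as_countable_mixture
    {d : ℕ} (hd : 1 ≤ d) (A : Type*) [Fintype A] (hA : 2 ≤ Fintype.card A)
    (i : Fin d → ℤ) (p : A → ((Fin d → ℤ) → A) → ℝ)
    (hp0 : ∀ a η, 0 ≤ p a η) (hp1 : ∀ a η, p a η ≤ 1)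
    (hpsum : ∀ η, ∑ a, p a η = 1)
    (hcont : Filter.Tendsto (fun k : ℕ => delta i p k) Filter.atTop (nhds 0))
    (hsummable : Summable (fun k : ℕ => ((ball i (k : ℤ)).ncard : ℝ) * lamfun i p k)) :
    ∃ pk : ℤ → A → ((Fin d → ℤ) → A) → ℝ,
      (∀ (k : ℤ) (a : A) (η : (Fin d → ℤ) → A), -1 ≤ k →
        0 ≤ pk k a η ∧ pk k a η ≤ 1) ∧
      (∀ (k : ℤ) (a : A) (η ζ : (Fin d → ℤ) → A), -1 ≤ k →
        (∀ j ∈ ball i k, η j = ζ j) → pk k a η = pk k a ζ) ∧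
      (∀ (k : ℤ) (η : (Fin d → ℤ) → A), -1 ≤ k → ∑ a, pk k a η = 1) ∧
      (∀ (a : A) (η : (Fin d → ℤ) → A),
        HasSum (fun n : ℕ => lamfun i p ((n : ℤ) - 1) * pk ((n : ℤ) - 1) a η) (p a η)) := by
  classical
  haveI : Nonempty A := Fintype.card_pos_iff.mp (by omega)
  let be : ℕ → ℝ := fun n => if n = 0 then 0 else alphafun i p ((n : ℤ) - 2)
  let R : ((Fin d → ℤ) → A) → ℕ → A → ℝ := fun η n a => rfun i p ((n : ℤ) - 1) a η
  have hbs : ∀ n : ℕ, be (n + 1) = alphafun i p ((n : ℤ) - 1) := fun n => by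
    simp only [be, Nat.succ_ne_zero, if_false]
    congr 1; push_cast; ring
  have hb0 : be 0 = 0 := by simp [be]
  have hbe : ∀ n, be n ≤ be (n + 1) := by
    intro n
    cases n with
    | zero =>
      rw [hb0, hbs]
      exact le_alpha i p _ _ fun η => Finset.sum_nonneg fun a _ => rfun_nonneg i p hp0 _ a η
    | succ n =>
      rw [hbs, hbs]
      exact alpha_mono i p hp0 (by push_cast; linarith)
  have hlam : ∀ n : ℕ, lamfun i p ((n : ℤ) - 1) = be (n + 1) - be n := by
    intro n
    cases n with
    | zero => rw [hb0, hbs]; simp [lamfun]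
    | succ n =>
      have : ((n + 1 : ℕ) : ℤ) - 1 ≠ -1 := by push_cast; omega
      rw [hbs, hbs, lamfun, if_neg this]
      congr 2; push_cast; ring
  have hS : ∀ η n, be (n + 1) ≤ ∑ a, R η n a := fun η n => by
    rw [hbs]; exact alpha_le i p hp0 _ η
  have hRm : ∀ η n a, R η n a ≤ R η (n + 1) a := fun η n a =>
    rfun_mono i p hp0 (by push_cast; linarith) a η
  have hQ : ∀ η n, (∀ a, cumQ (R η) be n a ≤ R η n a) ∧ ∑ a, cumQ (R η) be n a = be n :=
    fun η => cumQ_main (R η) be (fun a => rfun_nonneg i p hp0 _ a η) (hRm η) hb0 hbe (hS η)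
  have hI := fun η n => incr_main (R η) be n (cumQ (R η) be n) (hQ η n).1 (hQ η n).2
    (hbe n) (hS η n)
  have hlim : Filter.Tendsto be Filter.atTop (nhds 1) := by
    rw [← Filter.tendsto_add_atTop_iff_nat 2]
    have hl : Filter.Tendsto (fun k : ℕ => 1 - (Fintype.card A : ℝ) * delta i p k)
        Filter.atTop (nhds 1) := by
      simpa using (hcont.const_mul (Fintype.card A : ℝ)).const_sub 1
    refine tendsto_of_tendsto_of_tendsto_of_le_of_le hl tendsto_const_nhds ?_ ?_
    · intro n
      have h := alpha_lower i p hp0 hp1 hpsum n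
      have e : be (n + 2) = alphafun i p n := by
        rw [show n + 2 = (n + 1) + 1 from rfl, hbs]; congr 1; push_cast; ring
      show _ ≤ be (n + 2)
      rw [e]; exact h
    · intro n
      have η : (Fin d → ℤ) → A := Classical.arbitrary _
      refine (hS η (n + 1)).trans ?_
      rw [← hpsum η]
      exact Finset.sum_le_sum fun a _ => rfun_le i p hp0 _ a η
  refine ⟨fun k a η => incr (R η) be (k + 1).toNat (cumQ (R η) be (k + 1).toNat) a,
    ?_, ?_, ?_, ?_⟩
  · intro k a η _
    obtain ⟨h1, h2, _⟩ := hI η (k + 1).toNat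
    exact ⟨h1 a, h2 ▸ Finset.single_le_sum (fun b _ => h1 b) (Finset.mem_univ a)⟩
  · intro k a η ζ hk h
    have hR : ∀ m ≤ (k + 1).toNat, R η m = R ζ m := fun m hm => by
      funext b
      exact rfun_congr i p (by omega) b η ζ h
    show incr _ _ _ _ _ = incr _ _ _ _ _
    rw [cumQ_congr (R η) (R ζ) be _ fun m hm => hR m hm.le]
    simp only [incr, hR _ le_rfl]
  · intro k η _
    exact (hI η _).2.1
  · intro a η
    have e : ∀ n : ℕ, ((n : ℤ) - 1 + 1).toNat = n := fun n => by omega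
    simp only [e, hlam]
    rw [hasSum_iff_tendsto_nat_of_nonneg
      (fun n => mul_nonneg (by linarith [hbe n]) ((hI η n).1 a))]
    simp only [cumQ_sum]
    have hle : ∀ n b, cumQ (R η) be n b ≤ p b η := fun n b =>
      ((hQ η n).1 b).trans (rfun_le i p hp0 _ b η)
    have hl : Filter.Tendsto (fun n => p a η - (1 - be n)) Filter.atTop (nhds (p a η)) := by
      simpa using (hlim.const_sub 1).const_sub (p a η)
    refine tendsto_of_tendsto_of_tendsto_of_le_of_le hl tendsto_const_nhds ?_ (fun n => hle n a)
    intro n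
    have h1 : p a η - cumQ (R η) be n a ≤ ∑ b, (p b η - cumQ (R η) be n b) :=
      Finset.single_le_sum (f := fun b => p b η - cumQ (R η) be n b)
        (fun b _ => by linarith [hle n b]) (Finset.mem_univ a)
    rw [Finset.sum_sub_distrib, hpsum, (hQ η n).2] at h1
    show _ - _ ≤ _
    linarith
end

section
/- Assume in addition that the sequence (q_l)_{l≥0} is nonincreasing and converges to q_∞. Then for every integer k ≥ 0, α_i(k) := min_{w ∈ {0,1}^{V_i(k)}} ( inf{c_i(1−w(i), ζ) : ζ ∈ {0,1}^{ℤ^d}, ζ(V_i(k)) = w} + 1 − sup{c_i(1−w(i), ζ) : ζ ∈ {0,1}^{ℤ^d}, ζ(V_i(k)) = w} ) = 1 − q_k + q_∞. -/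
open scoped BigOperators

/-- For a configuration `η` having a `1` at some site `≠ i`, `lidx i η` is the unique
`l ≥ 0` such that `η ≡ 0` on `V_i(l) \ {i}` and `η` takes the value `1` somewhere on
`V_i(l+1) \ {i}`; it is the smallest `l` such that some site `j ≠ i` with
`‖j - i‖₁ ≤ l + 1` has `η j = 1`. -/
noncomputable def lidx {d : ℕ} (i : Fin d → ℤ) (η : (Fin d → ℤ) → Bool) : ℕ :=
  sInf {l : ℕ | ∃ j, j ≠ i ∧ norm1 (j - i) ≤ (l : ℤ) + 1 ∧ η j = true}

/- The rates of the example: `c_i(1,η) = q_{l_i(η)}` if `η` has a `1` off `i`,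
`c_i(1,η) = q_∞` otherwise, and `c_i(0,η) = 1 - c_i(1,η)`. -/
open Classical in
noncomputable def crate {d : ℕ} (i : Fin d → ℤ) (q : ℕ → ℝ) (qinf : ℝ)
    (b : Bool) (η : (Fin d → ℤ) → Bool) : ℝ :=
  if b then (if ∃ j, j ≠ i ∧ η j = true then q (lidx i η) else qinf)
  else 1 - (if ∃ j, j ≠ i ∧ η j = true then q (lidx i η) else qinf)

theorem norm1_pos_of_ne {d : ℕ} {i j : Fin d → ℤ} (h : j ≠ i) : 1 ≤ norm1 (j - i) := by
  obtain ⟨u, hu⟩ := Function.ne_iff.mp h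
  have h1 : |(j - i) u| ≤ norm1 (j - i) := by
    unfold norm1
    exact Finset.single_le_sum (f := fun u => |(j - i) u|) (fun v _ => abs_nonneg _)
      (Finset.mem_univ u)
  have h2 : 0 < |(j - i) u| := by
    rw [abs_pos]
    exact sub_ne_zero.mpr hu
  omega

theorem lidx_le_of_agree {d : ℕ} {i : Fin d → ℤ} {k : ℕ} {ζ ξ : (Fin d → ℤ) → Bool}
    (hag : ∀ j ∈ ball i (k : ℤ), ζ j = ξ j)
    (hex : ∃ j ∈ ball i (k : ℤ), j ≠ i ∧ ζ j = true) : lidx i ξ ≤ lidx i ζ := by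
  obtain ⟨j, hjb, hji, hj⟩ := hex
  have hjb' : norm1 (j - i) ≤ (k : ℤ) := hjb
  have h1 := norm1_pos_of_ne hji
  have hmem : (k - 1) ∈ {l : ℕ | ∃ j, j ≠ i ∧ norm1 (j - i) ≤ (l : ℤ) + 1 ∧ ζ j = true} :=
    ⟨j, hji, by omega, hj⟩
  have hle : lidx i ζ ≤ k - 1 := Nat.sInf_le hmem
  obtain ⟨j', hmi, hmn, hj'⟩ := Nat.sInf_mem ⟨_, hmem⟩
  change norm1 (j' - i) ≤ (lidx i ζ : ℤ) + 1 at hmn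
  refine Nat.sInf_le ⟨j', hmi, hmn, ?_⟩
  rw [← hag j' (show norm1 (j' - i) ≤ (k : ℤ) by omega)]
  exact hj'

theorem le_lidx {d : ℕ} {i : Fin d → ℤ} {k : ℕ} {ζ : (Fin d → ℤ) → Bool}
    (h0 : ∀ j ∈ ball i (k : ℤ), j ≠ i → ζ j = false)
    (hex : ∃ j, j ≠ i ∧ ζ j = true) : k ≤ lidx i ζ := by
  obtain ⟨j, hji, hj⟩ := hex
  have hne : {l : ℕ | ∃ j, j ≠ i ∧ norm1 (j - i) ≤ (l : ℤ) + 1 ∧ ζ j = true}.Nonempty :=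
    ⟨(norm1 (j - i)).toNat, j, hji, by omega, hj⟩
  obtain ⟨j', hmi, hmn, hj'⟩ := Nat.sInf_mem hne
  change norm1 (j' - i) ≤ (lidx i ζ : ℤ) + 1 at hmn
  by_contra hlt
  have := h0 j' (show norm1 (j' - i) ≤ (k : ℤ) by omega) hmi
  simp [this] at hj'

theorem crate_false {d : ℕ} (i : Fin d → ℤ) (q : ℕ → ℝ) (qinf : ℝ) (η : (Fin d → ℤ) → Bool) :
    crate i q qinf false η = 1 - crate i q qinf true η := by
  simp [crate]

theorem crate_mem {d : ℕ} {i : Fin d → ℤ} {q : ℕ → ℝ} {qinf : ℝ} {k : ℕ}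
    (hmono : Antitone q) (hge : ∀ l, qinf ≤ q l) {ζ : (Fin d → ℤ) → Bool}
    (h0 : ∀ j ∈ ball i (k : ℤ), j ≠ i → ζ j = false) :
    qinf ≤ crate i q qinf true ζ ∧ crate i q qinf true ζ ≤ q k := by
  by_cases hex : ∃ j, j ≠ i ∧ ζ j = true
  · have : crate i q qinf true ζ = q (lidx i ζ) := by simp only [crate, if_pos hex, if_true]
    rw [this]
    exact ⟨hge _, hmono (le_lidx h0 hex)⟩
  · have : crate i q qinf true ζ = qinf := by simp only [crate, if_neg hex, if_true]
    rw [this]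
    exact ⟨le_rfl, hge _⟩

theorem crate_osc {d : ℕ} {i : Fin d → ℤ} {q : ℕ → ℝ} {qinf : ℝ} {k : ℕ}
    (hmono : Antitone q) (hge : ∀ l, qinf ≤ q l) {ζ ξ : (Fin d → ℤ) → Bool}
    (hag : ∀ j ∈ ball i (k : ℤ), ζ j = ξ j) (b : Bool) :
    crate i q qinf b ζ - crate i q qinf b ξ ≤ q k - qinf := by
  by_cases hex : ∃ j ∈ ball i (k : ℤ), j ≠ i ∧ ζ j = true
  · have hex' : ∃ j ∈ ball i (k : ℤ), j ≠ i ∧ ξ j = true := by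
      obtain ⟨j, hb, hj, hz⟩ := hex
      exact ⟨j, hb, hj, by rw [← hag j hb]; exact hz⟩
    have he : lidx i ζ = lidx i ξ :=
      le_antisymm (lidx_le_of_agree (fun j hj => (hag j hj).symm) hex')
        (lidx_le_of_agree hag hex)
    have e1 : ∃ j, j ≠ i ∧ ζ j = true := by
      obtain ⟨j, _, h⟩ := hex
      exact ⟨j, h⟩
    have e2 : ∃ j, j ≠ i ∧ ξ j = true := by
      obtain ⟨j, _, h⟩ := hex'
      exact ⟨j, h⟩
    have : crate i q qinf b ζ = crate i q qinf b ξ := by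
      simp only [crate, if_pos e1, if_pos e2, he]
    have := hge k
    linarith
  · have hz : ∀ j ∈ ball i (k : ℤ), j ≠ i → ζ j = false := by
      intro j hb hj
      by_contra h
      exact hex ⟨j, hb, hj, by simpa using h⟩
    have hx : ∀ j ∈ ball i (k : ℤ), j ≠ i → ξ j = false := fun j hb hj => by
      rw [← hag j hb]; exact hz j hb hj
    have m1 := crate_mem hmono hge hz
    have m2 := crate_mem hmono hge hx
    cases b
    · rw [crate_false, crate_false]; linarith
    · linarith

theorem crate_attain {d : ℕ} (hd : 1 ≤ d) (i : Fin d → ℤ) (q : ℕ → ℝ) (qinf : ℝ) (k : ℕ) :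
    ∃ ζ : (Fin d → ℤ) → Bool, (∀ j ∈ ball i (k : ℤ), false = ζ j) ∧
      crate i q qinf true ζ = q k := by
  classical
  let s : Fin d → ℤ := i + Pi.single ⟨0, hd⟩ ((k : ℤ) + 1)
  have hs : norm1 (s - i) = (k : ℤ) + 1 := by
    simp only [norm1, s, add_sub_cancel_left]
    rw [Finset.sum_eq_single ⟨0, hd⟩]
    · rw [Pi.single_eq_same, abs_of_nonneg (by positivity)]
    · intro b _ hb
      rw [Pi.single_eq_of_ne hb, abs_zero]
    · intro h
      exact absurd (Finset.mem_univ _) h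
  have hsi : s ≠ i := by
    intro h
    rw [h] at hs
    simp [norm1] at hs
    omega
  have h0 : ∀ j ∈ ball i (k : ℤ), false = decide (j = s) := by
    intro j hj
    have hj' : norm1 (j - i) ≤ (k : ℤ) := hj
    symm
    rw [decide_eq_false_iff_not]
    intro h
    rw [h, hs] at hj'
    omega
  have hex : ∃ j, j ≠ i ∧ decide (j = s) = true := ⟨s, hsi, by simp⟩
  refine ⟨fun j => decide (j = s), h0, ?_⟩
  have hl : lidx i (fun j => decide (j = s)) = k := by
    apply le_antisymm
    · exact Nat.sInf_le ⟨s, hsi, hs.le, by simp⟩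
    · exact le_lidx (fun j hj _ => (h0 j hj).symm) hex
  simp only [crate, if_pos hex, if_true, hl]

/-- if `(q_l)` is nonincreasing with limit `q_∞`, then for every
`k ≥ 0`,
`α_i(k) = min_{w ∈ {0,1}^{V_i(k)}} ( inf_{ζ(V_i(k)) = w} c_i(1-w(i),ζ) + 1
            - sup_{ζ(V_i(k)) = w} c_i(1-w(i),ζ) ) = 1 - q_k + q_∞`
(the minimum over `w` being expressed as the infimum over configurations `η`, the
bracketed quantity depending only on `η(V_i(k))`). -/
theorem example_alpha_k
    {d : ℕ} (hd : 1 ≤ d) (i : Fin d → ℤ)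
    (q : ℕ → ℝ) (hq : ∀ l, 0 < q l ∧ q l < 1) (qinf : ℝ)
    (hqinf0 : 0 ≤ qinf) (hqinf1 : qinf ≤ 1)
    (hmono : Antitone q) (hlim : Filter.Tendsto q Filter.atTop (nhds qinf)) :
    ∀ k : ℕ,
      sInf {x | ∃ η : (Fin d → ℤ) → Bool,
        (sInf {y | ∃ ζ : (Fin d → ℤ) → Bool,
            (∀ j ∈ ball i (k : ℤ), η j = ζ j) ∧ crate i q qinf (!(η i)) ζ = y}
          + 1
          - sSup {y | ∃ ζ : (Fin d → ℤ) → Bool,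
              (∀ j ∈ ball i (k : ℤ), η j = ζ j) ∧ crate i q qinf (!(η i)) ζ = y}) = x}
      = 1 - q k + qinf := by
  intro k
  have hge : ∀ l, qinf ≤ q l := fun l => hmono.le_of_tendsto hlim l
  apply IsLeast.csInf_eq
  constructor
  · refine ⟨fun _ => false, ?_⟩
    simp only [Bool.not_false]
    have hmem : ∀ ζ : (Fin d → ℤ) → Bool, (∀ j ∈ ball i (k : ℤ), false = ζ j) →
        qinf ≤ crate i q qinf true ζ ∧ crate i q qinf true ζ ≤ q k :=
      fun ζ h => crate_mem hmono hge (fun j hj _ => (h j hj).symm)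
    have hI : IsLeast {y | ∃ ζ : (Fin d → ℤ) → Bool,
        (∀ j ∈ ball i (k : ℤ), false = ζ j) ∧ crate i q qinf true ζ = y} qinf := by
      refine ⟨⟨fun _ => false, fun _ _ => rfl, by simp [crate]⟩, ?_⟩
      rintro y ⟨ζ, h, rfl⟩
      exact (hmem ζ h).1
    have hS : IsGreatest {y | ∃ ζ : (Fin d → ℤ) → Bool,
        (∀ j ∈ ball i (k : ℤ), false = ζ j) ∧ crate i q qinf true ζ = y} (q k) := by
      refine ⟨crate_attain hd i q qinf k, ?_⟩
      rintro y ⟨ζ, h, rfl⟩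
      exact (hmem ζ h).2
    rw [hI.csInf_eq, hS.csSup_eq]
    ring
  · rintro x ⟨η, rfl⟩
    set S := {y | ∃ ζ : (Fin d → ℤ) → Bool,
        (∀ j ∈ ball i (k : ℤ), η j = ζ j) ∧ crate i q qinf (!(η i)) ζ = y} with hSdef
    have hne : S.Nonempty := ⟨_, η, fun _ _ => rfl, rfl⟩
    have hosc : ∀ y ∈ S, ∀ z ∈ S, y - z ≤ q k - qinf := by
      rintro y ⟨ζ, h, rfl⟩ z ⟨ξ, h', rfl⟩
      exact crate_osc hmono hge (fun j hj => (h j hj).symm.trans (h' j hj)) _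
    have h1 : sSup S ≤ sInf S + (q k - qinf) := by
      apply csSup_le hne
      intro y hy
      have : y - (q k - qinf) ≤ sInf S := le_csInf hne fun z hz => by
        have := hosc y hy z hz
        linarith
      linarith
    linarith
end

section
/- For the heat-bath rates, setting λ(k) = α(k) − α(k−1) for k ≥ 0, one has Σ_{k≥0} |V_0(k)|·λ(k) = (2d+1)·(1 − Σ_{a∈A} min_{w∈A^{∂0}} Q(a,w)). In particular, Σ_{k≥0} |V_0(k)|·λ(k) < 1 if and only if Σ_{a∈A} min_{w∈A^{∂0}} Q(a,w) > 2d/(2d+1). -/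
open scoped BigOperators

/-- The boundary `∂0` of the origin: the sites of `ℤ^d` at L¹-distance `1`. -/
def Bdry (d : ℕ) : Type := {j : Fin d → ℤ // norm1 j = 1}

/-- The heat-bath rates: `c_0(a,ζ) = Q(a, ζ(∂0))`. -/
def hbRate {d : ℕ} {A : Type*} (Q : A → (Bdry d → A) → ℝ)
    (a : A) (ζ : (Fin d → ℤ) → A) : ℝ :=
  Q a (fun j => ζ j.1)

/-- `α(-1)` for the heat-bath rates. -/
noncomputable def alphaNeg {d : ℕ} {A : Type*} [Fintype A] [DecidableEq A]
    (Q : A → (Bdry d → A) → ℝ) : ℝ :=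
  ∑ a : A,
    min (sInf {x | ∃ ζ : (Fin d → ℤ) → A, ζ 0 ≠ a ∧ hbRate Q a ζ = x})
      (1 - sSup {x | ∃ ζ : (Fin d → ℤ) → A, ζ 0 = a ∧
        (∑ b ∈ ({a}ᶜ : Finset A), hbRate Q b ζ) = x})

/-- `α(k)`, `k ≥ 0`, for the heat-bath rates: the minimum over `w ∈ A^{V_0(k)}` of
`Σ_{a ≠ w(0)} inf_{ζ(V_0(k)) = w} c_0(a,ζ) + 1 - sup_{ζ(V_0(k)) = w} Σ_{b ≠ w(0)} c_0(b,ζ)`,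
the minimum over `w` being expressed as the infimum over configurations `η` (the
bracketed quantity depends only on `η(V_0(k))`). -/
noncomputable def alphaHB {d : ℕ} {A : Type*} [Fintype A] [DecidableEq A]
    (Q : A → (Bdry d → A) → ℝ) (k : ℕ) : ℝ :=
  sInf {x | ∃ η : (Fin d → ℤ) → A,
    ((∑ a ∈ ({η 0}ᶜ : Finset A),
        sInf {y | ∃ ζ : (Fin d → ℤ) → A,
          (∀ j : Fin d → ℤ, norm1 j ≤ (k : ℤ) → ζ j = η j) ∧ hbRate Q a ζ = y})
      + 1
      - sSup {y | ∃ ζ : (Fin d → ℤ) → A,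
          (∀ j : Fin d → ℤ, norm1 j ≤ (k : ℤ) → ζ j = η j) ∧
          (∑ b ∈ ({η 0}ᶜ : Finset A), hbRate Q b ζ) = y}) = x}

/-- `λ(k) = α(k) - α(k-1)` for `k ≥ 0` (with `α(-1) = alphaNeg Q`). -/
noncomputable def lamHB {d : ℕ} {A : Type*} [Fintype A] [DecidableEq A]
    (Q : A → (Bdry d → A) → ℝ) (k : ℕ) : ℝ :=
  if k = 0 then alphaHB Q 0 - alphaNeg Q else alphaHB Q k - alphaHB Q (k - 1)

theorem hb_ncard (d : ℕ) : {j : Fin d → ℤ | norm1 j ≤ ((1 : ℕ) : ℤ)}.ncard = 2 * d + 1 := by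
  let f : Option (Fin d × Bool) → (Fin d → ℤ) := fun o =>
    match o with
    | none => 0
    | some (i, s) => Pi.single i (if s then 1 else -1)
  have hf : Function.Injective f := by
    rintro (_ | ⟨i, s⟩) (_ | ⟨i', s'⟩) h
    · rfl
    · have h1 := congrFun h i'
      cases s' <;> simp [f] at h1
    · have h1 := congrFun h i
      cases s <;> simp [f] at h1
    · have h1 := congrFun h i
      by_cases hi : i = i'
      · subst hi
        cases s <;> cases s' <;> simp [f] at h1 ⊢
      · exfalso
        cases s <;> cases s' <;> simp [f, Pi.single_apply, hi] at h1
  have hr : {j : Fin d → ℤ | norm1 j ≤ ((1 : ℕ) : ℤ)} = Set.range f := by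
    ext j
    simp only [Set.mem_setOf_eq, Set.mem_range]
    constructor
    · intro h
      by_cases hj : j = 0
      · exact ⟨none, hj.symm⟩
      · obtain ⟨i, hi⟩ := Function.ne_iff.1 hj
        have hi1 : 1 ≤ |j i| := Int.one_le_abs hi
        have hs : |j i| + ∑ u ∈ Finset.univ.erase i, |j u| = norm1 j :=
          Finset.add_sum_erase _ (fun u => |j u|) (Finset.mem_univ i)
        have hnn : 0 ≤ ∑ u ∈ Finset.univ.erase i, |j u| :=
          Finset.sum_nonneg fun _ _ => abs_nonneg _
        have hz : ∑ u ∈ Finset.univ.erase i, |j u| = 0 := by push_cast at h; omega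
        rw [Finset.sum_eq_zero_iff_of_nonneg (fun _ _ => abs_nonneg _)] at hz
        have hi2 : |j i| = 1 := by push_cast at h; omega
        refine ⟨some (i, decide (0 < j i)), ?_⟩
        funext u
        by_cases hu : u = i
        · subst hu
          simp only [f, Pi.single_eq_same, decide_eq_true_eq]
          rcases abs_eq (by norm_num) |>.1 hi2 with h | h <;> simp [h]
        · have := hz u (by simp [hu])
          simp only [f, Pi.single_eq_of_ne hu]
          exact (abs_eq_zero.1 this).symm
    · rintro ⟨o, rfl⟩
      rcases o with _ | ⟨i, s⟩
      · simp [f, norm1]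
      · have : norm1 (f (some (i, s))) = 1 := by
          unfold norm1
          rw [Finset.sum_eq_single i]
          · cases s <;> simp [f]
          · intro b _ hb
            simp [f, Pi.single_eq_of_ne hb]
          · simp
        rw [this]; simp
  rw [hr, ← Set.image_univ, Set.ncard_image_of_injective _ hf, Set.ncard_univ]
  simp [Nat.card_eq_fintype_card]
  ring

/-- extension of a boundary configuration -/
noncomputable def hbExt {d : ℕ} {A : Type*} (w : Bdry d → A) (η : (Fin d → ℤ) → A) :
    (Fin d → ℤ) → A := by
  classical
  exact fun j => if h : norm1 j = 1 then w ⟨j, h⟩ else η j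

theorem hbExt_bdry {d : ℕ} {A : Type*} (w : Bdry d → A) (η : (Fin d → ℤ) → A) :
    (fun j : Bdry d => hbExt w η j.1) = w := by
  funext j
  have : norm1 j.1 = 1 := j.2
  unfold hbExt
  simp only [this, dif_pos]
  rfl

theorem hbExt_of_le {d : ℕ} {A : Type*} (w : Bdry d → A) (η : (Fin d → ℤ) → A)
    (j : Fin d → ℤ) (hj : norm1 j ≤ 0) : hbExt w η j = η j := by
  unfold hbExt
  rw [dif_neg (by omega)]

theorem norm1_zero' {d : ℕ} : norm1 (0 : Fin d → ℤ) = 0 := by simp [norm1]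

section
variable {d : ℕ} {A : Type*} [Fintype A] [DecidableEq A] (Q : A → (Bdry d → A) → ℝ)

theorem hb_inf (P : ((Fin d → ℤ) → A) → Prop) (a : A)
    (hP : ∀ w : Bdry d → A, ∃ η, P (hbExt w η)) :
    {x | ∃ ζ : (Fin d → ℤ) → A, P ζ ∧ hbRate Q a ζ = x} = Set.range (Q a) := by
  ext x
  constructor
  · rintro ⟨ζ, -, h⟩
    exact ⟨_, h⟩
  · rintro ⟨w, h⟩
    obtain ⟨η, hη⟩ := hP w
    refine ⟨_, hη, ?_⟩
    unfold hbRate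
    rw [hbExt_bdry, h]

theorem hb_compl (hQsum : ∀ w, ∑ a, Q a w = 1) (a : A) (ζ : (Fin d → ℤ) → A) :
    (∑ b ∈ ({a}ᶜ : Finset A), hbRate Q b ζ) = 1 - hbRate Q a ζ := by
  have h := hQsum (fun j => ζ j.1)
  rw [← Finset.sum_compl_add_sum ({a} : Finset A), Finset.sum_singleton] at h
  unfold hbRate
  linarith

theorem hb_sup [Nonempty A] (hQ0 : ∀ a w, 0 ≤ Q a w) (hQsum : ∀ w, ∑ a, Q a w = 1)
    (P : ((Fin d → ℤ) → A) → Prop) (a : A)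
    (hP : ∀ w : Bdry d → A, ∃ η, P (hbExt w η)) :
    sSup {x | ∃ ζ : (Fin d → ℤ) → A, P ζ ∧ (∑ b ∈ ({a}ᶜ : Finset A), hbRate Q b ζ) = x}
      = 1 - sInf (Set.range (Q a)) := by
  have hbd : BddBelow (Set.range (Q a)) := ⟨0, by rintro _ ⟨w, rfl⟩; exact hQ0 a w⟩
  have hg := isGLB_csInf (Set.range_nonempty (Q a)) hbd
  have hs := hb_inf Q P a hP
  refine IsLUB.csSup_eq ⟨?_, ?_⟩ ?_
  · rintro _ ⟨ζ, -, rfl⟩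
    rw [hb_compl Q hQsum]
    have : sInf (Set.range (Q a)) ≤ hbRate Q a ζ := hg.1 ⟨_, rfl⟩
    linarith
  · intro u hu
    have : 1 - u ≤ sInf (Set.range (Q a)) := by
      apply hg.2
      rw [← hs]
      rintro _ ⟨ζ, hζ, rfl⟩
      have := hu ⟨ζ, hζ, rfl⟩
      rw [hb_compl Q hQsum] at this
      linarith
    linarith
  · obtain ⟨η, hη⟩ := hP (fun _ => Classical.arbitrary A)
    exact ⟨_, _, hη, rfl⟩

theorem hb_neg (hA : 2 ≤ Fintype.card A)
    (hQ0 : ∀ a w, 0 ≤ Q a w) (hQsum : ∀ w, ∑ a, Q a w = 1) :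
    alphaNeg Q = ∑ a : A, sInf (Set.range (Q a)) := by
  haveI : Nontrivial A := Fintype.one_lt_card_iff_nontrivial.1 hA
  unfold alphaNeg
  refine Finset.sum_congr rfl fun a _ => ?_
  obtain ⟨c, hc⟩ := exists_ne a
  rw [hb_inf Q (fun ζ => ζ 0 ≠ a) a, hb_sup Q hQ0 hQsum (fun ζ => ζ 0 = a) a]
  · simp
  · intro w
    exact ⟨fun _ => a, hbExt_of_le _ _ _ norm1_zero'.le⟩
  · intro w
    refine ⟨fun _ => c, ?_⟩
    rw [hbExt_of_le _ _ _ norm1_zero'.le]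
    exact hc

theorem hb_zero [Nonempty A] 
    (hQ0 : ∀ a w, 0 ≤ Q a w) (hQsum : ∀ w, ∑ a, Q a w = 1) :
    alphaHB Q 0 = ∑ a : A, sInf (Set.range (Q a)) := by
  unfold alphaHB
  have key : ∀ η : (Fin d → ℤ) → A, ((∑ a ∈ ({η 0}ᶜ : Finset A),
        sInf {y | ∃ ζ : (Fin d → ℤ) → A,
          (∀ j : Fin d → ℤ, norm1 j ≤ ((0 : ℕ) : ℤ) → ζ j = η j) ∧ hbRate Q a ζ = y})
      + 1
      - sSup {y | ∃ ζ : (Fin d → ℤ) → A,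
          (∀ j : Fin d → ℤ, norm1 j ≤ ((0 : ℕ) : ℤ) → ζ j = η j) ∧
          (∑ b ∈ ({η 0}ᶜ : Finset A), hbRate Q b ζ) = y})
        = ∑ a : A, sInf (Set.range (Q a)) := by
    intro η
    have hP : ∀ w : Bdry d → A, ∃ η', ∀ j : Fin d → ℤ, norm1 j ≤ ((0 : ℕ) : ℤ) →
        hbExt w η' j = η j := fun w => ⟨η, fun j hj => hbExt_of_le _ _ _ (by simpa using hj)⟩
    rw [hb_sup Q hQ0 hQsum _ _ hP, Finset.sum_congr rfl fun a _ => by rw [hb_inf Q _ a hP],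
      ← Finset.sum_compl_add_sum ({η 0} : Finset A) (fun a => sInf (Set.range (Q a))),
      Finset.sum_singleton]
    ring
  simp only [key]
  simp

theorem hb_pos [Nonempty A] (hQsum : ∀ w, ∑ a, Q a w = 1) (k : ℕ) (hk : 1 ≤ k) :
    alphaHB Q k = 1 := by
  unfold alphaHB
  have key : ∀ η : (Fin d → ℤ) → A, ((∑ a ∈ ({η 0}ᶜ : Finset A),
        sInf {y | ∃ ζ : (Fin d → ℤ) → A,
          (∀ j : Fin d → ℤ, norm1 j ≤ (k : ℤ) → ζ j = η j) ∧ hbRate Q a ζ = y})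
      + 1
      - sSup {y | ∃ ζ : (Fin d → ℤ) → A,
          (∀ j : Fin d → ℤ, norm1 j ≤ (k : ℤ) → ζ j = η j) ∧
          (∑ b ∈ ({η 0}ᶜ : Finset A), hbRate Q b ζ) = y})
        = 1 := by
    intro η
    have hr : ∀ ζ : (Fin d → ℤ) → A, (∀ j : Fin d → ℤ, norm1 j ≤ (k : ℤ) → ζ j = η j) →
        ∀ a, hbRate Q a ζ = hbRate Q a η := by
      intro ζ h a
      unfold hbRate
      congr 1
      funext j
      apply h
      have : norm1 j.1 = 1 := j.2
      omega
    have h1 : ∀ a, {y | ∃ ζ : (Fin d → ℤ) → A,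
          (∀ j : Fin d → ℤ, norm1 j ≤ (k : ℤ) → ζ j = η j) ∧ hbRate Q a ζ = y}
          = {hbRate Q a η} := by
      intro a
      ext y
      constructor
      · rintro ⟨ζ, h, rfl⟩
        exact hr ζ h a
      · rintro rfl
        exact ⟨η, fun _ _ => rfl, rfl⟩
    have h2 : {y | ∃ ζ : (Fin d → ℤ) → A,
          (∀ j : Fin d → ℤ, norm1 j ≤ (k : ℤ) → ζ j = η j) ∧
          (∑ b ∈ ({η 0}ᶜ : Finset A), hbRate Q b ζ) = y}
          = {∑ b ∈ ({η 0}ᶜ : Finset A), hbRate Q b η} := by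
      ext y
      constructor
      · rintro ⟨ζ, h, rfl⟩
        exact Finset.sum_congr rfl fun a _ => hr ζ h a
      · rintro rfl
        exact ⟨η, fun _ _ => rfl, rfl⟩
    simp only [h1, h2, csInf_singleton, csSup_singleton]
    ring
  simp only [key]
  simp
end

/-- for the heat-bath rates,
`Σ_{k≥0} |V_0(k)| λ(k) = (2d+1)(1 - Σ_{a∈A} min_{w∈A^{∂0}} Q(a,w))`; in particular
`Σ_{k≥0} |V_0(k)| λ(k) < 1` iff `Σ_{a∈A} min_{w∈A^{∂0}} Q(a,w) > 2d/(2d+1)`. -/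
theorem heat_bath_summability_criterion
    {d : ℕ} (hd : 1 ≤ d) (A : Type*) [Fintype A] [DecidableEq A]
    (hA : 2 ≤ Fintype.card A)
    (Q : A → (Bdry d → A) → ℝ)
    (hQ0 : ∀ a w, 0 ≤ Q a w) (hQ1 : ∀ a w, Q a w ≤ 1)
    (hQsum : ∀ w, ∑ a, Q a w = 1) :
    (∑' k : ℕ, (({j : Fin d → ℤ | norm1 j ≤ (k : ℤ)}.ncard : ℝ) * lamHB Q k))
      = (2 * d + 1) * (1 - ∑ a : A, sInf (Set.range (Q a))) ∧
    ((∑' k : ℕ, (({j : Fin d → ℤ | norm1 j ≤ (k : ℤ)}.ncard : ℝ) * lamHB Q k)) < 1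
      ↔ (2 * d) / (2 * d + 1) < ∑ a : A, sInf (Set.range (Q a))) := by
  haveI : Nonempty A := Fintype.card_pos_iff.1 (by omega)
  have hmain : (∑' k : ℕ, (({j : Fin d → ℤ | norm1 j ≤ (k : ℤ)}.ncard : ℝ) * lamHB Q k))
      = (2 * d + 1) * (1 - ∑ a : A, sInf (Set.range (Q a))) := by
    rw [tsum_eq_single 1]
    · rw [hb_ncard]
      simp only [lamHB, one_ne_zero, if_false, Nat.sub_self]
      rw [hb_pos Q hQsum 1 le_rfl, hb_zero Q hQ0 hQsum]
      push_cast
      ring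
    · intro k hk
      rcases Nat.eq_zero_or_pos k with rfl | h
      · simp [lamHB, hb_zero Q hQ0 hQsum, hb_neg Q hA hQ0 hQsum]
      · have h0 : k ≠ 0 := by omega
        simp only [lamHB, h0, if_false]
        rw [hb_pos Q hQsum k h, hb_pos Q hQsum (k - 1) (by omega)]
        simp
  refine ⟨hmain, ?_⟩
  rw [hmain]
  have hpos : (0 : ℝ) < 2 * d + 1 := by positivity
  rw [div_lt_iff₀ hpos]
  constructor <;> intro h <;> nlinarith
end

section
/- Let (Ω, 𝓕, (𝓕_n)_{n≥0}, P) be a filtered probability space, let λ̄ ∈ [0,1), and let (S_n)_{n≥0} be an adapted sequence of integrable real-valued random variables such that the process (S_n + n(1−λ̄))_{n≥0} is a supermartingale and E[S_0] ≤ 0. Let T = inf{n ≥ 0 : S_n = −1} (with T = ∞ if no such n exists), and assume that for every n, S_n ≥ 0 almost surely on the event {T > n}. Then E[T] ≤ 1/(1−λ̄); in particular T < ∞ almost surely. -/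
open MeasureTheory
open scoped ENNReal

/-- if `(S_n)` is adapted and integrable, `(S_n + n(1-λ̄))` is a
supermartingale with `E[S_0] ≤ 0`, and `S_n ≥ 0` a.s. on `{T > n}` where
`T = inf{n : S_n = -1}` (with `T = ∞` if no such `n` exists), then
`E[T] ≤ 1/(1-λ̄)`; in particular `T < ∞` almost surely. -/
theorem hitting_time_expectation_bound
    {Ω : Type*} {m0 : MeasurableSpace Ω} {P : Measure Ω} [IsProbabilityMeasure P]
    (ℱ : Filtration ℕ m0) (lb : ℝ) (hlb0 : 0 ≤ lb) (hlb1 : lb < 1)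
    (S : ℕ → Ω → ℝ)
    (hadapt : Adapted ℱ S) (hint : ∀ n, Integrable (S n) P)
    (hsuper : Supermartingale (fun (n : ℕ) (ω : Ω) => S n ω + n * (1 - lb)) ℱ P)
    (hS0 : ∫ ω, S 0 ω ∂P ≤ 0)
    (T : Ω → ℝ≥0∞)
    (hT : ∀ ω, T ω = sInf {x : ℝ≥0∞ | ∃ n : ℕ, S n ω = -1 ∧ x = (n : ℝ≥0∞)})
    (hpos : ∀ n : ℕ, ∀ᵐ ω ∂P, (n : ℝ≥0∞) < T ω → 0 ≤ S n ω) :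
    (∫⁻ ω, T ω ∂P) ≤ ENNReal.ofReal (1 / (1 - lb)) ∧ ∀ᵐ ω ∂P, T ω < ⊤ := by
  set c : ℝ := 1 - lb with hc
  have hc0 : 0 < c := by rw [hc]; linarith
  let A : ℕ → Set Ω := fun n => {ω | ∀ j ≤ n, S j ω ≠ -1}
  have hAm : ∀ n, MeasurableSet[ℱ n] (A n) := by
    intro n
    have : A n = ⋂ j ∈ Set.Iic n, (S j ⁻¹' {-1})ᶜ := by
      ext ω; simp [A]
    rw [this]
    refine MeasurableSet.biInter (Set.to_countable _) ?_
    intro j hj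
    have h1 : MeasurableSet[ℱ j] (S j ⁻¹' {-1}) := (hadapt j) (measurableSet_singleton _)
    exact (ℱ.mono hj _ h1).compl
  have hAm' : ∀ n, MeasurableSet (A n) := fun n => ℱ.le n _ (hAm n)
  have hAT : ∀ n ω, ω ∈ A n → (n : ℝ≥0∞) < T ω := by
    intro n ω hω
    have h1 : ((n + 1 : ℕ) : ℝ≥0∞) ≤ T ω := by
      rw [hT]
      refine le_sInf ?_
      rintro x ⟨k, hk, rfl⟩
      have : ¬ k ≤ n := fun h => hω k h hk
      exact_mod_cast (by omega : n + 1 ≤ k)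
    refine lt_of_lt_of_le ?_ h1
    exact_mod_cast Nat.lt_succ_self n
  have hsub : ∀ n, A (n + 1) ⊆ A n := fun n ω h j hj => h j (by omega)
  have hconst : ∀ n (B : Set Ω), MeasurableSet B → (∀ ω ∈ B, S n ω = -1) →
      ∫ ω in B, S n ω ∂P = - P.real B := by
    intro n B hB h
    rw [setIntegral_congr_fun hB (g := fun _ => (-1 : ℝ)) (fun ω hω => h ω hω)]
    simp
  have key : ∀ n, ∫ ω in A n, S n ω ∂P + P.real (A n) - 1
      + c * ∑ k ∈ Finset.range n, P.real (A k) ≤ 0 := by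
    intro n
    induction n with
    | zero =>
      have h1 := integral_add_compl (hAm' 0) (hint 0)
      have h2 := hconst 0 (A 0)ᶜ (hAm' 0).compl (by
        intro ω hω
        by_contra h
        exact hω (fun j hj => by
          obtain rfl : j = 0 := by omega
          exact h))
      have h3 := probReal_compl_eq_one_sub (μ := P) (hAm' 0)
      simp only [Finset.range_zero, Finset.sum_empty]
      linarith
    | succ n ih =>
      have h1 := hsuper.setIntegral_le (Nat.le_succ n) (hAm n)
      rw [integral_add (hint _).integrableOn (integrable_const _),
        integral_add (hint _).integrableOn (integrable_const _)] at h1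
      simp only [integral_const, smul_eq_mul, measureReal_restrict_apply_univ] at h1
      have h2 := hconst (n + 1) (A n \ A (n + 1)) ((hAm' n).diff (hAm' _)) (by
        rintro ω ⟨h, h'⟩
        by_contra h0
        refine h' (fun j hj => ?_)
        rcases Nat.lt_or_ge n j with h3 | h3
        · obtain rfl : j = n + 1 := by omega
          exact h0
        · exact h j h3)
      have h3 := integral_diff (hAm' (n + 1)) (hint (n + 1)).integrableOn (hsub n)
      have h4 := measureReal_diff (μ := P) (hsub n) (hAm' (n + 1))
      rw [Finset.sum_range_succ]
      push_cast at h1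
      simp only [Nat.succ_eq_add_one] at h1
      linarith
  have hsum : ∀ n, ∑ k ∈ Finset.range n, P.real (A k) ≤ 1 / c := by
    intro n
    have h0 : 0 ≤ ∫ ω in A n, S n ω ∂P := by
      refine setIntegral_nonneg_of_ae_restrict ?_
      refine (ae_restrict_iff' (hAm' n)).2 ?_
      filter_upwards [hpos n] with ω h hω
      exact h (hAT n ω hω)
    have h1 := key n
    have h2 : 0 ≤ P.real (A n) := measureReal_nonneg
    rw [le_div_iff₀ hc0]
    linarith
  have hTle : ∀ ω, T ω ≤ ∑' k, (A k).indicator (fun _ => (1 : ℝ≥0∞)) ω := by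
    intro ω
    by_cases h : ∃ n, S n ω = -1
    · classical
      have h1 : T ω ≤ (Nat.find h : ℝ≥0∞) := by
        rw [hT]
        exact sInf_le ⟨_, Nat.find_spec h, rfl⟩
      refine h1.trans ?_
      refine le_trans (le_of_eq ?_) (ENNReal.sum_le_tsum (Finset.range (Nat.find h)))
      rw [Finset.sum_congr rfl (g := fun _ => (1 : ℝ≥0∞))]
      · simp
      · intro k hk
        refine Set.indicator_of_mem ?_ _
        intro j hj
        exact Nat.find_min h (lt_of_le_of_lt hj (Finset.mem_range.1 hk))
    · push Not at h
      have : ∀ k, (A k).indicator (fun _ => (1 : ℝ≥0∞)) ω = 1 :=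
        fun k => Set.indicator_of_mem (show ω ∈ A k from fun j _ => h j) _
      simp only [this]
      rw [ENNReal.tsum_const_eq_top_of_ne_zero one_ne_zero]
      exact le_top
  have hmeas : ∀ k, Measurable ((A k).indicator (fun _ => (1 : ℝ≥0∞))) :=
    fun k => measurable_const.indicator (hAm' k)
  have hbound : ∫⁻ ω, ∑' k, (A k).indicator (fun _ => (1 : ℝ≥0∞)) ω ∂P
      ≤ ENNReal.ofReal (1 / c) := by
    rw [lintegral_tsum (fun k => (hmeas k).aemeasurable)]
    rw [ENNReal.tsum_eq_iSup_nat]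
    refine iSup_le fun n => ?_
    refine le_trans (le_of_eq ?_) (ENNReal.ofReal_le_ofReal (hsum n))
    rw [ENNReal.ofReal_sum_of_nonneg (fun _ _ => measureReal_nonneg)]
    refine Finset.sum_congr rfl fun k _ => ?_
    rw [lintegral_indicator_const (hAm' k), one_mul, ofReal_measureReal]
  refine ⟨(lintegral_mono hTle).trans hbound, ?_⟩
  have := ae_lt_top (Measurable.ennreal_tsum hmeas)
    (ne_of_lt (hbound.trans_lt ENNReal.ofReal_lt_top))
  filter_upwards [this] with ω h
  exact (hTle ω).trans_lt h
end
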